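/- Let n ≥ 1 jobs be given for the 3-machine permutation flowshop with integer processing times p_{ij} ∈ ℕ for i ∈ {1,2,3}, j ∈ {1,…,n}, with P = max_{i,j} p_{ij} > 0, and let ε > 0 be a real number. Set K = εP/(n+2) and p'_{ij} = ⌈p_{ij}/K⌉ for all i, j. Let π* be a permutation minimizing the makespan C_max for the processing times p_{ij}, and let π' be a permutation minimizing the makespan C'_max for the processing times p'_{ij}. Then C_max(π') ≤ (1+ε)·C_max(π*). -/

import Mathlib

/-- Completion times of the 3-machine (more generally `m`-machine) permutation
flowshop : `fsC q π i k` is the completion time `C(i,k)` of the `k`-th scheduled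
job (1-based) on machine `i` (1-based), for processing times `q i j` and
permutation `π`, defined by
`C(i,k) = max (C(i-1,k)) (C(i,k-1)) + q i (π k)` with `C(0,k) = C(i,0) = 0`. -/
def fsC (q : ℕ → ℕ → ℝ) (π : ℕ → ℕ) : ℕ → ℕ → ℝ
  | 0, _ => 0
  | _ + 1, 0 => 0
  | i + 1, k + 1 =>
      max (fsC q π i (k + 1)) (fsC q π (i + 1) k) + q (i + 1) (π (k + 1))

/-!
Rounding up moves every scaled time `K * p'` into the interval from `p` to `p + K`. The makespan is
monotone in the processing times and homogeneous, and it is the length of a longest monotone lattice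
path through the `m × n` grid of operations. Such a path visits `m + n - 1` of them, so rounding
raises the makespan of any fixed schedule by at most `K * (m + n - 1) = ε * P`. Since `P` is one of
the processing times, it is itself at most the optimal makespan.
-/

/-- The rounded processing times `p'` obtained from the times `q` with scaling unit `K`. They are
real numbers, so that the makespan `fsC` applies to them; a negative quotient is rounded to `0`. -/
noncomputable def ceilTimes (K : ℝ) (q : ℕ → ℕ → ℝ) (i j : ℕ) : ℝ := ⌈q i j / K⌉₊

theorem fsC_const_mul {K : ℝ} (hK : 0 ≤ K) (q : ℕ → ℕ → ℝ) (π : ℕ → ℕ) (i k : ℕ) :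
    fsC (fun i j => K * q i j) π i k = K * fsC q π i k := by
  fun_induction fsC q π i k with
  | case1 => simp only [fsC, mul_zero]
  | case2 => simp only [fsC, mul_zero]
  | case3 i k ih_machine ih_position =>
    simp only [fsC, ih_machine, ih_position, mul_add, mul_max_of_nonneg _ _ hK]

theorem fsC_le_fsC {a b : ℕ → ℕ → ℝ} (h : ∀ i j, a i j ≤ b i j) (π : ℕ → ℕ) (i k : ℕ) :
    fsC a π i k ≤ fsC b π i k := by
  fun_induction fsC a π i k with
  | case1 => simp only [fsC, le_refl]
  | case2 => simp only [fsC, le_refl]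
  | case3 i k ih_machine ih_position =>
    rw [fsC]
    exact add_le_add (max_le_max ih_machine ih_position) (h _ _)

/-- A critical path to position `k` on machine `i` visits `i + k - 1` operations. The subtraction
is truncated, which only matters when `i = k = 0`. -/
theorem fsC_add_const_le {c : ℝ} (hc : 0 ≤ c) (q : ℕ → ℕ → ℝ) (π : ℕ → ℕ) (i k : ℕ) :
    fsC (fun i j => q i j + c) π i k ≤ fsC q π i k + c * (i + k - 1 : ℕ) := by
  fun_induction fsC q π i k with
  | case1 => simp only [fsC]; positivity
  | case2 => simp only [fsC]; positivity
  | case3 i k ih_machine ih_position =>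
    rw [show i + (k + 1) - 1 = i + k by omega] at ih_machine
    rw [show i + 1 + k - 1 = i + k by omega] at ih_position
    rw [fsC, show i + 1 + (k + 1) - 1 = i + k + 1 by omega, Nat.cast_succ]
    have h_max := max_le_max ih_machine ih_position
    rw [max_add_add_right] at h_max
    linarith

theorem fsC_le_mul_fsC_ceilTimes {K : ℝ} (hK : 0 < K) (q : ℕ → ℕ → ℝ) (π : ℕ → ℕ) (i k : ℕ) :
    fsC q π i k ≤ K * fsC (ceilTimes K q) π i k := by
  rw [← fsC_const_mul hK.le]
  refine fsC_le_fsC (fun i j => ?_) π i k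
  rw [← div_le_iff₀' hK]
  exact Nat.le_ceil _

theorem mul_fsC_ceilTimes_le {q : ℕ → ℕ → ℝ} (hq : ∀ i j, 0 ≤ q i j) {K : ℝ} (hK : 0 < K)
    (π : ℕ → ℕ) (i k : ℕ) :
    K * fsC (ceilTimes K q) π i k ≤ fsC q π i k + K * (i + k - 1 : ℕ) := by
  have h_round (i j : ℕ) : K * ceilTimes K q i j ≤ q i j + K :=
    calc K * ceilTimes K q i j
        ≤ K * (q i j / K + 1) := by
          gcongr
          exact (Nat.ceil_lt_add_one (div_nonneg (hq i j) hK.le)).le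
      _ = q i j + K := by rw [mul_add_one, mul_div_cancel₀ _ hK.ne']
  rw [← fsC_const_mul hK.le]
  exact (fsC_le_fsC h_round π i k).trans (fsC_add_const_le hK.le q π i k)

theorem fsC_le_add_of_fsC_ceilTimes_le {q : ℕ → ℕ → ℝ} (hq : ∀ i j, 0 ≤ q i j) {K : ℝ}
    (hK : 0 < K) {π σ : ℕ → ℕ} {i k : ℕ}
    (h : fsC (ceilTimes K q) π i k ≤ fsC (ceilTimes K q) σ i k) :
    fsC q π i k ≤ fsC q σ i k + K * (i + k - 1 : ℕ) :=
  calc fsC q π i k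
      ≤ K * fsC (ceilTimes K q) π i k := fsC_le_mul_fsC_ceilTimes hK q π i k
    _ ≤ K * fsC (ceilTimes K q) σ i k := by gcongr
    _ ≤ fsC q σ i k + K * (i + k - 1 : ℕ) := mul_fsC_ceilTimes_le hq hK σ i k

theorem fsC_nonneg {q : ℕ → ℕ → ℝ} (hq : ∀ i j, 0 ≤ q i j) (π : ℕ → ℕ) (i k : ℕ) :
    0 ≤ fsC q π i k := by
  fun_induction fsC q π i k with
  | case1 => rfl
  | case2 => rfl
  | case3 i k ih_machine _ => exact add_nonneg (le_max_of_le_left ih_machine) (hq _ _)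

theorem monotone_fsC_machine {q : ℕ → ℕ → ℝ} (hq : ∀ i j, 0 ≤ q i j) (π : ℕ → ℕ) (k : ℕ) :
    Monotone fun i => fsC q π i k := by
  refine monotone_nat_of_le_succ fun i => ?_
  cases k with
  | zero => cases i <;> simp only [fsC, le_refl]
  | succ k =>
    rw [fsC]
    exact le_add_of_le_of_nonneg (le_max_left _ _) (hq _ _)

theorem monotone_fsC_position {q : ℕ → ℕ → ℝ} (hq : ∀ i j, 0 ≤ q i j) (π : ℕ → ℕ) (i : ℕ) :
    Monotone (fsC q π i) := by
  refine monotone_nat_of_le_succ fun k => ?_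
  cases i with
  | zero => simp only [fsC, le_refl]
  | succ i =>
    simp only [fsC]
    exact le_add_of_le_of_nonneg (le_max_right _ _) (hq _ _)

theorem le_fsC_self {q : ℕ → ℕ → ℝ} (hq : ∀ i j, 0 ≤ q i j) (π : ℕ → ℕ) {i k : ℕ}
    (hi : 1 ≤ i) (hk : 1 ≤ k) : q i (π k) ≤ fsC q π i k := by
  obtain ⟨i, rfl⟩ := Nat.exists_eq_add_of_le' hi
  obtain ⟨k, rfl⟩ := Nat.exists_eq_add_of_le' hk
  rw [fsC]
  exact le_add_of_nonneg_left (le_max_of_le_left (fsC_nonneg hq π i (k + 1)))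

theorem le_fsC_of_surjOn {q : ℕ → ℕ → ℝ} (hq : ∀ i j, 0 ≤ q i j) {m n : ℕ}
    {σ : ℕ → ℕ} (hσ : Set.SurjOn σ (Set.Icc 1 n) (Set.Icc 1 n))
    {i j : ℕ} (hi : i ∈ Set.Icc 1 m) (hj : j ∈ Set.Icc 1 n) : q i j ≤ fsC q σ m n := by
  obtain ⟨k, hk, rfl⟩ := hσ hj
  calc q i (σ k)
      ≤ fsC q σ i k := le_fsC_self hq σ hi.1 hk.1
    _ ≤ fsC q σ m k := monotone_fsC_machine hq σ k hi.2
    _ ≤ fsC q σ m n := monotone_fsC_position hq σ m hk.2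

theorem stmt13_general {q : ℕ → ℕ → ℝ} (hq : ∀ i j, 0 ≤ q i j) {m n : ℕ} {P : ℝ}
    (hP : P ∈ Set.image2 q (Set.Icc 1 m) (Set.Icc 1 n)) (hP_pos : 0 < P) {ε : ℝ} (hε : 0 < ε)
    {K : ℝ} (hK : K = ε * P / (m + n - 1 : ℕ))
    {σ : ℕ → ℕ} (hσ : Set.SurjOn σ (Set.Icc 1 n) (Set.Icc 1 n)) {π : ℕ → ℕ}
    (hπσ : fsC (ceilTimes K q) π m n ≤ fsC (ceilTimes K q) σ m n) :
    fsC q π m n ≤ (1 + ε) * fsC q σ m n := by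
  obtain ⟨i, hi, j, hj, rfl⟩ := hP
  have h_path : (0 : ℝ) < (m + n - 1 : ℕ) := by
    have := hi.1.trans hi.2
    have := hj.1.trans hj.2
    exact_mod_cast (by omega : 0 < m + n - 1)
  have hK_pos : 0 < K := by rw [hK]; positivity
  calc fsC q π m n
      ≤ fsC q σ m n + K * (m + n - 1 : ℕ) := fsC_le_add_of_fsC_ceilTimes_le hq hK_pos hπσ
    _ = fsC q σ m n + ε * q i j := by rw [hK, div_mul_cancel₀ _ h_path.ne']
    _ ≤ fsC q σ m n + ε * fsC q σ m n := by gcongr; exact le_fsC_of_surjOn hq hσ hi hj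
    _ = (1 + ε) * fsC q σ m n := (one_add_mul _ _).symm

theorem stmt13 (n : ℕ) (hn : 1 ≤ n) (p : ℕ → ℕ → ℕ) (P : ℕ)
    (hP : P = (Finset.Icc 1 3 ×ˢ Finset.Icc 1 n).sup fun ij => p ij.1 ij.2)
    (hPpos : 0 < P) (ε : ℝ) (hε : 0 < ε) (K : ℝ) (hK : K = ε * P / (n + 2))
    (p' : ℕ → ℕ → ℝ) (hp' : ∀ i j, p' i j = (⌈(p i j : ℝ) / K⌉₊ : ℝ))
    (πstar : ℕ → ℕ) (hπstar : Set.BijOn πstar (Set.Icc 1 n) (Set.Icc 1 n))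
    (hπstarOpt : ∀ σ : ℕ → ℕ, Set.BijOn σ (Set.Icc 1 n) (Set.Icc 1 n) →
      fsC (fun i j => (p i j : ℝ)) πstar 3 n ≤ fsC (fun i j => (p i j : ℝ)) σ 3 n)
    (π' : ℕ → ℕ) (hπ' : Set.BijOn π' (Set.Icc 1 n) (Set.Icc 1 n))
    (hπ'Opt : ∀ σ : ℕ → ℕ, Set.BijOn σ (Set.Icc 1 n) (Set.Icc 1 n) →
      fsC p' π' 3 n ≤ fsC p' σ 3 n) :
    fsC (fun i j => (p i j : ℝ)) π' 3 n ≤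
      (1 + ε) * fsC (fun i j => (p i j : ℝ)) πstar 3 n := by
  obtain rfl : p' = ceilTimes K fun i j => p i j := funext₂ hp'
  obtain ⟨i, hi, j, hj, hPij⟩ : P ∈ Set.image2 p (Set.Icc 1 3) (Set.Icc 1 n) := by
    rw [hP, ← Set.image_prod, ← Finset.coe_Icc, ← Finset.coe_Icc, ← Finset.coe_product]
    exact Finset.sup_mem_of_nonempty ⟨(1, 1), by simp [hn]⟩
  exact stmt13_general (fun _ _ => Nat.cast_nonneg _) ⟨i, hi, j, hj, congrArg Nat.cast hPij⟩
    (Nat.cast_pos.2 hPpos) hε (by rw [hK, show 3 + n - 1 = n + 2 by omega]; norm_cast)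
    hπstar.surjOn (hπ'Opt πstar hπstar)
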